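/- arXiv:1110.1456 — 2 statements merged into one kernel-verified Lean document; each statement's English description precedes it below -/
import Mathlib

section
/- Let f, g ∈ R(x) and h = f + g. If val(f) = val(g) and there exists u ∈ ℝ^n such that for all sufficiently small ε > 0 one has val(f(p^{εu} x)) < val(g(p^{εu} x)), then val(h) = val(f) and lc(h) = lc(f) + lc(g). -/
noncomputable section
open Classical

/-- Multivariate polynomials in `n` variables over `ℂ`. -/
abbrev MvP (n : ℕ) := MvPolynomial (Fin n) ℂ

/-- The field of rational functions in `n` variables over `ℂ`. -/
abbrev KK (n : ℕ) := FractionRing (MvP n)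

/-- The minimal `ε`-weight `min_{m ∈ supp f} ∑ i, ε i * m i` of a multivariate
polynomial: the `p`-adic valuation of `f(p^{ε₁}x₁, …, p^{εₙ}xₙ)`. -/
def mvValEps (n : ℕ) (ε : Fin n → ℝ) (f : MvP n) : ℝ :=
  if h : f.support.Nonempty then f.support.inf' h (fun m => ∑ i, ε i * (m i : ℝ)) else 0

/-- `deg_ε(r)` for a rational function `r`: the `p`-adic valuation of
`r(p^{ε₁}x₁, …, p^{εₙ}xₙ)`, computed from a fraction representation of `r`. -/
def degEps (n : ℕ) (ε : Fin n → ℝ) (r : KK n) : ℝ :=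
  mvValEps n ε (IsLocalization.sec (nonZeroDivisors (MvP n)) r).1
  - mvValEps n ε ((IsLocalization.sec (nonZeroDivisors (MvP n)) r).2 : MvP n)

/-- The degree `deg(r) = -inf_{ε ≠ 0} deg_ε(r)/‖ε‖` of a rational function, with
`‖·‖` the supremum norm on `Fin n → ℝ`. -/
def degK (n : ℕ) (r : KK n) : ℝ :=
  -sInf {d : ℝ | ∃ ε : Fin n → ℝ, ε ≠ 0 ∧ d = degEps n ε r / ‖ε‖}

/-- Membership in `F(x)`: a Hahn series over `ℝ` with rational-function coefficients
whose exponent set is discrete and bounded below, i.e. only finitely many exponents lie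
below any given real number. -/
def FiniteBelow (n : ℕ) (f : HahnSeries ℝ (KK n)) : Prop :=
  ∀ r : ℝ, {t ∈ f.support | t ≤ r}.Finite

/-- Membership in `R(x) ⊂ F(x)`: the coefficients satisfy the degree-growth bound
`deg(a_t) ≤ C (t - val f)` for all exponents `t > val f`, for some constant `C`. -/
def InR (n : ℕ) (f : HahnSeries ℝ (KK n)) : Prop :=
  FiniteBelow n f ∧
    ∃ C : ℝ, ∀ t ∈ f.support, t ≠ f.order → degK n (f.coeff t) ≤ C * (t - f.order)

/-- The substitution `f(p^{ε₁}x₁, …, p^{εₙ}xₙ)` of a polynomial `f`, as a Hahn series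
in `p` with rational-function coefficients. -/
def polySubst (n : ℕ) (ε : Fin n → ℝ) (f : MvP n) : HahnSeries ℝ (KK n) :=
  ∑ m ∈ f.support, HahnSeries.single (∑ i, ε i * (m i : ℝ))
    (algebraMap (MvP n) (KK n) (MvPolynomial.monomial m (MvPolynomial.coeff m f)))

/-- The substitution `r(p^{ε₁}x₁, …, p^{εₙ}xₙ)` of a rational function `r`, as an
element of the field of Hahn series in `p` with rational-function coefficients. -/
def ratSubst (n : ℕ) (ε : Fin n → ℝ) (r : KK n) : HahnSeries ℝ (KK n) :=
  polySubst n ε (IsLocalization.sec (nonZeroDivisors (MvP n)) r).1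
  / polySubst n ε ((IsLocalization.sec (nonZeroDivisors (MvP n)) r).2 : MvP n)

/-- The substitution `f(p^{ε₁}x₁, …, p^{εₙ}xₙ)` of a series `f = ∑_t a_t p^t`: the
series `∑_t a_t(p^ε x) p^t` re-expanded in `p`, characterized coefficientwise by
`coeff s = ∑_t (a_t(p^ε x)).coeff (s - t)`; junk value `0` when no such Hahn series
exists. -/
def serSubst (n : ℕ) (ε : Fin n → ℝ) (f : HahnSeries ℝ (KK n)) : HahnSeries ℝ (KK n) :=
  if h : ∃ g : HahnSeries ℝ (KK n),
      ∀ s : ℝ, g.coeff s = ∑ᶠ t : ℝ, (ratSubst n ε (f.coeff t)).coeff (s - t)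
  then h.choose else 0

/-!
It suffices that the leading coefficients do not cancel. For small `ε` the degree-growth bound keeps
every term `a_t(p^ε x) p^t` with `t > val f` above the midpoint of `val f` and `t`, while the
leading term stays below all these midpoints, so `f(p^ε x)` has valuation `val f + deg_ε (lc f)`.
If `lc g = -lc f`, then `f` and `g` would have the same valuation after every sufficiently small
substitution.
-/

open HahnSeries Filter Topology

section WellOrderedSets

variable {Γ : Type*} [LinearOrder Γ] {S : Set Γ}

theorem isPWO_of_forall_isPWO_inter_Iic (hS : ∀ r, (S ∩ Set.Iic r).IsPWO) : S.IsPWO := by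
  simp only [Set.isPWO_iff_isWF, Set.isWF_iff_no_descending_seq] at hS ⊢
  exact fun x hx hxS ↦ hS (x 0) x hx fun k ↦ ⟨hxS k, hx.antitone k.zero_le⟩

theorem exists_gt_forall_mem_le_of_isWF [NoMaxOrder Γ] (hS : S.IsWF) (a : Γ) :
    ∃ b > a, ∀ t ∈ S, a < t → b ≤ t := by
  rcases (S ∩ Set.Ioi a).eq_empty_or_nonempty with hempty | hne
  · obtain ⟨b, hab⟩ := exists_gt a
    exact ⟨b, hab, fun t htS hat ↦ (hempty.subset ⟨htS, hat⟩).elim⟩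
  · have hWF : (S ∩ Set.Ioi a).IsWF := hS.mono Set.inter_subset_left
    exact ⟨hWF.min hne, (hWF.min_mem hne).2, fun t htS hat ↦ hWF.min_le hne ⟨htS, hat⟩⟩

end WellOrderedSets

section HahnSeriesLemmas

variable {Γ R α : Type*}

theorem prod_single [AddCommMonoid Γ] [PartialOrder Γ] [IsOrderedCancelAddMonoid Γ]
    [CommSemiring R] (s : Finset α) (a : α → Γ) (r : α → R) :
    ∏ i ∈ s, single (a i) (r i) = single (∑ i ∈ s, a i) (∏ i ∈ s, r i) := by
  induction s using Finset.induction_on with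
  | empty => rfl
  | insert i s hi ih =>
    rw [Finset.prod_insert hi, ih, single_mul_single, Finset.sum_insert hi, Finset.prod_insert hi]

theorem order_div_of_ne_zero [AddCommGroup Γ] [LinearOrder Γ] [IsOrderedAddMonoid Γ] [Field R]
    {x y : HahnSeries Γ R} (hx : x ≠ 0) (hy : y ≠ 0) : (x / y).order = x.order - y.order := by
  rw [eq_sub_iff_add_eq, ← order_mul (div_ne_zero hx hy) hy, div_mul_cancel₀ x hy]

theorem order_add_eq_left_of_leadingCoeff_add_ne_zero [Zero Γ] [LinearOrder Γ] [AddMonoid R]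
    {x y : HahnSeries Γ R} (hxy : x.order = y.order)
    (hlc : x.leadingCoeff + y.leadingCoeff ≠ 0) : (x + y).order = x.order := by
  have hcoeff : (x + y).coeff x.order ≠ 0 := by
    rwa [coeff_add, ← leadingCoeff_eq, hxy, ← leadingCoeff_eq]
  refine le_antisymm (order_le_of_coeff_ne_zero hcoeff) ?_
  simpa only [← hxy, min_self] using min_order_le_order_add (ne_zero_of_coeff_ne_zero hcoeff)

theorem leadingCoeff_add_of_leadingCoeff_add_ne_zero [Zero Γ] [LinearOrder Γ] [AddMonoid R]
    {x y : HahnSeries Γ R} (hxy : x.order = y.order)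
    (hlc : x.leadingCoeff + y.leadingCoeff ≠ 0) :
    (x + y).leadingCoeff = x.leadingCoeff + y.leadingCoeff := by
  rw [leadingCoeff_eq, order_add_eq_left_of_leadingCoeff_add_ne_zero hxy hlc, coeff_add,
    ← leadingCoeff_eq, hxy, ← leadingCoeff_eq]

variable [LinearOrder Γ] [AddCommMonoid R]

/-- A family of Hahn series of which only finitely many have order at most any given bound, as a
summable family. Using `orderTop`, with value `⊤` at `0`, lets infinitely many members vanish. -/
def summableFamilyOfFiniteOrderTopLE (x : α → HahnSeries Γ R)
    (hx : ∀ g : Γ, {a | (x a).orderTop ≤ g}.Finite) : SummableFamily Γ R α where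
  toFun := x
  isPWO_iUnion_support' := by
    refine isPWO_of_forall_isPWO_inter_Iic fun g ↦ ?_
    refine ((Finset.isPWO_bUnion (hx g).toFinset).2 fun a _ ↦ (x a).isPWO_support).mono ?_
    rintro s ⟨hs, hsg⟩
    obtain ⟨a, ha⟩ := Set.mem_iUnion.1 hs
    have hag : (x a).orderTop ≤ g :=
      (orderTop_le_of_coeff_ne_zero ha).trans (WithTop.coe_le_coe.2 hsg)
    exact Set.mem_biUnion ((hx g).mem_toFinset.2 hag) ha
  finite_co_support' g := (hx g).subset fun _ ↦ orderTop_le_of_coeff_ne_zero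

theorem orderTop_hsum_of_forall_orderTop_lt {s : SummableFamily Γ R α} {a : α} (ha : s a ≠ 0)
    (hlt : ∀ b ≠ a, (s a).orderTop < (s b).orderTop) : s.hsum.orderTop = (s a).orderTop := by
  obtain ⟨g, hg⟩ := WithTop.ne_top_iff_exists.1 (orderTop_ne_top.2 ha)
  rw [← hg] at hlt ⊢
  refine SummableFamily.hsum_orderTop_of_le hg (fun b g' hg' ↦ ?_)
    fun b hb ↦ coeff_eq_zero_of_lt_orderTop (hlt b hb)
  have hgb : (g : WithTop Γ) ≤ (s b).orderTop := by
    rcases eq_or_ne b a with rfl | hba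
    exacts [hg.le, (hlt b hba).le]
  exact WithTop.coe_le_coe.1 (hgb.trans (orderTop_le_of_coeff_ne_zero hg'))

end HahnSeriesLemmas

theorem frequently_nhds_zero_of_forall_smul {E : Type*} [AddCommMonoid E] [Module ℝ E]
    [TopologicalSpace E] [ContinuousSMul ℝ E] {P : E → Prop} {u : E} {ε₀ : ℝ} (hε₀ : 0 < ε₀)
    (hP : ∀ ε : ℝ, 0 < ε → ε ≤ ε₀ → P (ε • u)) : ∃ᶠ v in 𝓝 0, P v := by
  have hsmul : Tendsto (fun ε : ℝ ↦ ε • u) (𝓝[>] 0) (𝓝 0) :=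
    (Continuous.tendsto' (by fun_prop) 0 0 (zero_smul ℝ u)).mono_left nhdsWithin_le_nhds
  have hray : ∀ᶠ ε in 𝓝[>] (0 : ℝ), P (ε • u) := by
    filter_upwards [Ioc_mem_nhdsGT hε₀] with ε hε using hP ε hε.1 hε.2
  exact hsmul.frequently hray.frequently

theorem weight_eq_sum_mul {σ A : Type*} [Fintype σ] [CommSemiring A] (w : σ → A) (m : σ →₀ ℕ) :
    Finsupp.weight w m = ∑ i, w i * (m i : A) := by
  simp [Finsupp.weight_apply, Finsupp.sum_fintype, mul_comm]

theorem abs_weight_le_degree_mul_norm {σ : Type*} [Fintype σ] (w : σ → ℝ) (m : σ →₀ ℕ) :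
    |Finsupp.weight w m| ≤ m.degree * ‖w‖ := by
  rw [weight_eq_sum_mul, Finsupp.degree_eq_sum, Nat.cast_sum, Finset.sum_mul]
  refine (Finset.abs_sum_le_sum_abs _ _).trans (Finset.sum_le_sum fun i _ ↦ ?_)
  rw [abs_mul, Nat.abs_cast, mul_comm]
  gcongr
  exact norm_le_pi_norm w i

section Substitution

variable {n : ℕ} {ε : Fin n → ℝ}

section MinimalWeight

variable {f : MvP n} {m : Fin n →₀ ℕ}

theorem mvValEps_le_weight (hm : m ∈ f.support) : mvValEps n ε f ≤ Finsupp.weight ε m := by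
  rw [mvValEps, dif_pos ⟨m, hm⟩, weight_eq_sum_mul]
  exact Finset.inf'_le _ hm

theorem exists_mem_support_weight_eq_mvValEps (ε : Fin n → ℝ) (hf : f ≠ 0) :
    ∃ m ∈ f.support, Finsupp.weight ε m = mvValEps n ε f := by
  have hne := MvPolynomial.support_nonempty.2 hf
  simp only [mvValEps, dif_pos hne, weight_eq_sum_mul]
  obtain ⟨m, hm, hmin⟩ := Finset.exists_mem_eq_inf' hne fun m ↦ ∑ i, ε i * (m i : ℝ)
  exact ⟨m, hm, hmin.symm⟩

theorem abs_mvValEps_le (f : MvP n) (ε : Fin n → ℝ) :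
    |mvValEps n ε f| ≤ f.totalDegree * ‖ε‖ := by
  rcases eq_or_ne f 0 with rfl | hf
  · simp [mvValEps]
  · obtain ⟨m, hm, hmin⟩ := exists_mem_support_weight_eq_mvValEps ε hf
    rw [← hmin]
    refine (abs_weight_le_degree_mul_norm ε m).trans ?_
    gcongr
    exact MvPolynomial.le_totalDegree hm

end MinimalWeight

section PolynomialSubstitution

variable {f : MvP n} {m : Fin n →₀ ℕ}

theorem coeff_polySubst (f : MvP n) (s : ℝ) :
    (polySubst n ε f).coeff s =
      algebraMap (MvP n) (KK n) (MvPolynomial.weightedHomogeneousComponent ε s f) := by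
  simp only [polySubst, coeff_sum, coeff_single, MvPolynomial.weightedHomogeneousComponent_apply,
    weight_eq_sum_mul, Finset.sum_filter, map_sum]
  refine Finset.sum_congr rfl fun m _ ↦ ?_
  simp only [eq_comm (a := s), apply_ite (algebraMap (MvP n) (KK n)), map_zero]

theorem coeff_polySubst_weight_ne_zero (hm : m ∈ f.support) :
    (polySubst n ε f).coeff (Finsupp.weight ε m) ≠ 0 := by
  rw [coeff_polySubst, Ne, FaithfulSMul.algebraMap_eq_zero_iff]
  intro h
  have hcoeff := congrArg (MvPolynomial.coeff m) h
  rw [MvPolynomial.coeff_weightedHomogeneousComponent, if_pos rfl,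
    MvPolynomial.coeff_zero] at hcoeff
  exact MvPolynomial.mem_support_iff.1 hm hcoeff

theorem polySubst_ne_zero (hf : f ≠ 0) : polySubst n ε f ≠ 0 :=
  have ⟨_, hm⟩ := MvPolynomial.support_nonempty.2 hf
  ne_zero_of_coeff_ne_zero (coeff_polySubst_weight_ne_zero hm)

theorem order_polySubst (hf : f ≠ 0) : (polySubst n ε f).order = mvValEps n ε f := by
  obtain ⟨m, hm, hmin⟩ := exists_mem_support_weight_eq_mvValEps ε hf
  refine le_antisymm ?_ ((le_order_iff_forall (polySubst_ne_zero hf)).2 fun s hs ↦ ?_)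
  · rw [← hmin]
    exact order_le_of_coeff_ne_zero (coeff_polySubst_weight_ne_zero hm)
  · rw [coeff_polySubst, MvPolynomial.weightedHomogeneousComponent_eq_zero', map_zero]
    exact fun m hm ↦ (hs.trans_le (mvValEps_le_weight hm)).ne'

/-- The substitution `xᵢ ↦ p ^ εᵢ xᵢ` on polynomials as a ring homomorphism; `polySubst` is its
underlying function. -/
def polySubstHom (ε : Fin n → ℝ) : MvP n →+* HahnSeries ℝ (KK n) :=
  MvPolynomial.eval₂Hom (HahnSeries.C.comp ((algebraMap (MvP n) (KK n)).comp MvPolynomial.C))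
    fun i ↦ single (ε i) (algebraMap (MvP n) (KK n) (MvPolynomial.X i))

theorem polySubstHom_monomial (m : Fin n →₀ ℕ) (c : ℂ) :
    polySubstHom ε (MvPolynomial.monomial m c) =
      single (∑ i, ε i * (m i : ℝ))
        (algebraMap (MvP n) (KK n) (MvPolynomial.monomial m c)) := by
  rw [polySubstHom, MvPolynomial.eval₂Hom_monomial, MvPolynomial.monomial_eq,
    Finsupp.prod_fintype _ _ fun _ ↦ pow_zero _, Finsupp.prod_fintype _ _ fun _ ↦ pow_zero _]
  simp only [single_pow, prod_single, RingHom.comp_apply, C_apply, single_mul_single, zero_add,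
    map_mul, map_prod, map_pow, nsmul_eq_mul, mul_comm (ε _)]

theorem polySubstHom_apply (f : MvP n) : polySubstHom ε f = polySubst n ε f := by
  conv_lhs => rw [← MvPolynomial.support_sum_monomial_coeff f, map_sum]
  simp only [polySubstHom_monomial, polySubst]

theorem polySubstHom_injective (ε : Fin n → ℝ) : Function.Injective (polySubstHom ε) := by
  refine (injective_iff_map_eq_zero _).2 fun f hf ↦ ?_
  contrapose! hf
  rw [polySubstHom_apply]
  exact polySubst_ne_zero hf

end PolynomialSubstitution

section RationalFunctionSubstitution

variable {r : KK n}

/-- The substitution `xᵢ ↦ p ^ εᵢ xᵢ` on rational functions as a homomorphism of fields; `ratSubst`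
is its underlying function. -/
def ratSubstHom (ε : Fin n → ℝ) : KK n →+* HahnSeries ℝ (KK n) :=
  IsFractionRing.lift (K := KK n) (L := HahnSeries ℝ (KK n)) (polySubstHom_injective ε)

theorem ratSubstHom_apply (r : KK n) : ratSubstHom ε r = ratSubst n ε r := by
  conv_lhs => rw [← IsLocalization.mk'_sec (M := nonZeroDivisors (MvP n)) (KK n) r]
  rw [ratSubstHom, IsFractionRing.lift_mk', polySubstHom_apply, polySubstHom_apply, ratSubst]

theorem ratSubst_zero : ratSubst n ε 0 = 0 := by
  rw [← ratSubstHom_apply, map_zero]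

theorem ratSubst_neg (r : KK n) : ratSubst n ε (-r) = -ratSubst n ε r := by
  simp only [← ratSubstHom_apply, map_neg]

theorem ratSubst_ne_zero (hr : r ≠ 0) : ratSubst n ε r ≠ 0 := by
  rwa [← ratSubstHom_apply, map_ne_zero]

theorem order_ratSubst (hr : r ≠ 0) : (ratSubst n ε r).order = degEps n ε r := by
  have hnum : (IsLocalization.sec (nonZeroDivisors (MvP n)) r).1 ≠ 0 :=
    IsLocalization.sec_fst_ne_zero hr
  have hden := nonZeroDivisors.coe_ne_zero (IsLocalization.sec (nonZeroDivisors (MvP n)) r).2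
  rw [ratSubst, order_div_of_ne_zero (polySubst_ne_zero hnum) (polySubst_ne_zero hden),
    order_polySubst hnum, order_polySubst hden, degEps]

theorem degEps_neg (hr : r ≠ 0) : degEps n ε (-r) = degEps n ε r := by
  rw [← order_ratSubst hr, ← order_ratSubst (neg_ne_zero.2 hr), ratSubst_neg, order_neg]

end RationalFunctionSubstitution

section DegreeBounds

theorem exists_forall_abs_degEps_le (r : KK n) :
    ∃ M : ℝ, ∀ ε : Fin n → ℝ, |degEps n ε r| ≤ M * ‖ε‖ := by
  let num := (IsLocalization.sec (nonZeroDivisors (MvP n)) r).1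
  let den := (IsLocalization.sec (nonZeroDivisors (MvP n)) r).2
  refine ⟨num.totalDegree + (den : MvP n).totalDegree, fun ε ↦ ?_⟩
  rw [degEps, add_mul]
  exact (abs_sub _ _).trans (add_le_add (abs_mvValEps_le num ε) (abs_mvValEps_le den ε))

theorem tendsto_degEps_zero (r : KK n) : Tendsto (fun ε ↦ degEps n ε r) (𝓝 0) (𝓝 0) := by
  obtain ⟨M, hM⟩ := exists_forall_abs_degEps_le r
  refine squeeze_zero_norm hM ?_
  simpa using (tendsto_norm_zero (E := Fin n → ℝ)).const_mul M

theorem neg_degK_mul_norm_le_degEps (r : KK n) (ε : Fin n → ℝ) :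
    -degK n r * ‖ε‖ ≤ degEps n ε r := by
  obtain ⟨M, hM⟩ := exists_forall_abs_degEps_le r
  rcases eq_or_ne ε 0 with rfl | hε
  · simpa using neg_le_of_abs_le (hM 0)
  · rw [degK, neg_neg, ← le_div_iff₀ (norm_pos_iff.2 hε)]
    refine csInf_le ⟨-M, ?_⟩ ⟨ε, hε, rfl⟩
    rintro d ⟨δ, hδ, rfl⟩
    rw [le_div_iff₀ (norm_pos_iff.2 hδ), neg_mul]
    exact neg_le_of_abs_le (hM δ)

end DegreeBounds

section SeriesSubstitution

variable {f : HahnSeries ℝ (KK n)}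

/-- The summand `a_t(p^ε x) p^t` of the substitution into `f = ∑ a_t p^t`. -/
def substTerm (ε : Fin n → ℝ) (f : HahnSeries ℝ (KK n)) (t : ℝ) : HahnSeries ℝ (KK n) :=
  single t 1 * ratSubst n ε (f.coeff t)

theorem substTerm_ne_zero {t : ℝ} (ht : t ∈ f.support) : substTerm ε f t ≠ 0 :=
  mul_ne_zero (single_ne_zero one_ne_zero) (ratSubst_ne_zero ht)

theorem orderTop_substTerm {t : ℝ} (ht : t ∈ f.support) :
    (substTerm ε f t).orderTop = ↑(t + degEps n ε (f.coeff t)) := by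
  rw [substTerm, orderTop_mul, orderTop_single one_ne_zero,
    ← order_eq_orderTop_of_ne_zero (ratSubst_ne_zero ht), order_ratSubst ht, WithTop.coe_add]

theorem orderTop_substTerm_of_notMem_support {t : ℝ} (ht : t ∉ f.support) :
    (substTerm ε f t).orderTop = ⊤ := by
  rw [substTerm, Function.notMem_support.1 ht, ratSubst_zero, mul_zero, orderTop_zero]

theorem serSubst_eq_hsum {s : SummableFamily ℝ (KK n) ℝ} (hs : ∀ t, s t = substTerm ε f t) :
    serSubst n ε f = s.hsum := by
  have hcoeff : ∀ g : ℝ, s.hsum.coeff g =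
      ∑ᶠ t : ℝ, (ratSubst n ε (f.coeff t)).coeff (g - t) := fun g ↦ by
    simp only [SummableFamily.coeff_hsum, hs, substTerm, coeff_single_mul, one_mul]
  have hex : ∃ F : HahnSeries ℝ (KK n), ∀ g : ℝ,
      F.coeff g = ∑ᶠ t : ℝ, (ratSubst n ε (f.coeff t)).coeff (g - t) := ⟨_, hcoeff⟩
  rw [serSubst, dif_pos hex]
  ext g
  rw [hex.choose_spec, hcoeff]

theorem FiniteBelow.finite_orderTop_substTerm_le (hf : FiniteBelow n f)
    (hlower : ∀ t ∈ f.support, t ≠ f.order →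
      (f.order + t) / 2 ≤ t + degEps n ε (f.coeff t)) (g : ℝ) :
    {t | (substTerm ε f t).orderTop ≤ g}.Finite := by
  refine (hf (max f.order (2 * g - f.order))).subset fun t ht ↦ ?_
  have hsupp : t ∈ f.support := by
    by_contra h
    simp [orderTop_substTerm_of_notMem_support h] at ht
  refine ⟨hsupp, le_max_iff.2 (or_iff_not_imp_left.2 fun hlt ↦ ?_)⟩
  have hle : t + degEps n ε (f.coeff t) ≤ g := by
    rwa [Set.mem_ofPred_eq, orderTop_substTerm hsupp, WithTop.coe_le_coe] at ht
  linarith [hlower t hsupp (not_le.1 hlt).ne']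

theorem FiniteBelow.order_serSubst (hf : FiniteBelow n f) (hf0 : f ≠ 0)
    (hlower : ∀ t ∈ f.support, t ≠ f.order →
      (f.order + t) / 2 ≤ t + degEps n ε (f.coeff t))
    (hupper : ∀ t ∈ f.support, t ≠ f.order →
      f.order + degEps n ε f.leadingCoeff < (f.order + t) / 2) :
    (serSubst n ε f).order = f.order + degEps n ε f.leadingCoeff := by
  have horder : f.order ∈ f.support := coeff_order_eq_zero.not.2 hf0
  set s := summableFamilyOfFiniteOrderTopLE (substTerm ε f) (hf.finite_orderTop_substTerm_le hlower)
  have hleading : (s f.order).orderTop = ↑(f.order + degEps n ε f.leadingCoeff) := by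
    rw [leadingCoeff_eq]
    exact orderTop_substTerm horder
  have hdominant : ∀ t ≠ f.order, (s f.order).orderTop < (s t).orderTop := fun t hne ↦ by
    rw [hleading]
    by_cases ht : t ∈ f.support
    · exact (WithTop.coe_lt_coe.2 ((hupper t ht hne).trans_le (hlower t ht hne))).trans_eq
        (orderTop_substTerm ht).symm
    · exact (WithTop.coe_lt_top _).trans_eq (orderTop_substTerm_of_notMem_support ht).symm
  have horderTop : s.hsum.orderTop = ↑(f.order + degEps n ε f.leadingCoeff) :=
    (orderTop_hsum_of_forall_orderTop_lt (substTerm_ne_zero horder) hdominant).trans hleading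
  have hne : s.hsum ≠ 0 := orderTop_ne_top.1 (horderTop ▸ WithTop.coe_ne_top)
  rw [serSubst_eq_hsum (s := s) fun _ ↦ rfl, ← WithTop.coe_inj, order_eq_orderTop_of_ne_zero hne,
    horderTop]

theorem InR.eventually_midpoint_le (hf : InR n f) :
    ∀ᶠ ε in 𝓝 (0 : Fin n → ℝ), ∀ t ∈ f.support, t ≠ f.order →
      (f.order + t) / 2 ≤ t + degEps n ε (f.coeff t) := by
  obtain ⟨-, C, hC⟩ := hf
  have hsmall : ∀ᶠ ε in 𝓝 (0 : Fin n → ℝ), C * ‖ε‖ < 1 / 2 := by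
    refine Tendsto.eventually_lt_const one_half_pos ?_
    simpa using (tendsto_norm_zero (E := Fin n → ℝ)).const_mul C
  filter_upwards [hsmall] with ε hε t ht hne
  have hle : f.order ≤ t := order_le_of_coeff_ne_zero ht
  have hgrowth : degK n (f.coeff t) * ‖ε‖ ≤ (t - f.order) / 2 :=
    calc degK n (f.coeff t) * ‖ε‖
      _ ≤ C * (t - f.order) * ‖ε‖ := by gcongr; exact hC t ht hne
      _ = C * ‖ε‖ * (t - f.order) := by ring
      _ ≤ 1 / 2 * (t - f.order) := by gcongr
      _ = (t - f.order) / 2 := by ring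
  linarith [neg_degK_mul_norm_le_degEps (f.coeff t) ε]

theorem eventually_lt_midpoint (f : HahnSeries ℝ (KK n)) :
    ∀ᶠ ε in 𝓝 (0 : Fin n → ℝ), ∀ t ∈ f.support, t ≠ f.order →
      f.order + degEps n ε f.leadingCoeff < (f.order + t) / 2 := by
  obtain ⟨b, hb, hgap⟩ := exists_gt_forall_mem_le_of_isWF f.isWF_support f.order
  have hsmall : ∀ᶠ ε in 𝓝 0, degEps n ε f.leadingCoeff < (b - f.order) / 2 :=
    (tendsto_degEps_zero _).eventually_lt_const (half_pos (sub_pos.2 hb))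
  filter_upwards [hsmall] with ε hε t ht hne
  linarith [hgap t ht ((order_le_of_coeff_ne_zero ht).lt_of_ne' hne)]

theorem InR.eventually_order_serSubst (hf : InR n f) (hf0 : f ≠ 0) :
    ∀ᶠ ε in 𝓝 (0 : Fin n → ℝ),
      (serSubst n ε f).order = f.order + degEps n ε f.leadingCoeff := by
  filter_upwards [hf.eventually_midpoint_le, eventually_lt_midpoint f] with ε hlower hupper
  exact hf.1.order_serSubst hf0 hlower hupper

end SeriesSubstitution

theorem leadingCoeff_add_ne_zero_of_frequently_order_serSubst_ne
    {f g : HahnSeries ℝ (KK n)} (hf : f ≠ 0) (hg : g ≠ 0) (hfR : InR n f) (hgR : InR n g)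
    (hval : f.order = g.order)
    (hne : ∃ᶠ ε in 𝓝 (0 : Fin n → ℝ), (serSubst n ε f).order ≠ (serSubst n ε g).order) :
    f.leadingCoeff + g.leadingCoeff ≠ 0 := by
  intro hcancel
  refine hne ?_
  filter_upwards [hfR.eventually_order_serSubst hf, hgR.eventually_order_serSubst hg]
    with ε hfε hgε
  have hdeg : degEps n ε g.leadingCoeff = degEps n ε f.leadingCoeff := by
    rw [eq_neg_of_add_eq_zero_right hcancel, degEps_neg (leadingCoeff_ne_zero.2 hf)]
  rw [not_not, hfε, hgε, hval, hdeg]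

theorem sum_equal_valuation_general {f g : HahnSeries ℝ (KK n)}
    (hf : f ≠ 0) (hg : g ≠ 0) (hfR : InR n f) (hgR : InR n g) (hval : f.order = g.order)
    (hne : ∃ᶠ ε in 𝓝 (0 : Fin n → ℝ), (serSubst n ε f).order ≠ (serSubst n ε g).order) :
    (f + g).order = f.order ∧
      (f + g).coeff ((f + g).order) = f.coeff f.order + g.coeff g.order := by
  have hlc := leadingCoeff_add_ne_zero_of_frequently_order_serSubst_ne hf hg hfR hgR hval hne
  simp only [← leadingCoeff_eq]
  exact ⟨order_add_eq_left_of_leadingCoeff_add_ne_zero hval hlc,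
    leadingCoeff_add_of_leadingCoeff_add_ne_zero hval hlc⟩

end Substitution

/-- Let `f, g ∈ R(x)` (nonzero) and `h = f + g`.  If `val(f) = val(g)` and there exists
`u : Fin n → ℝ` such that for all sufficiently small `ε > 0` one has
`val(f(p^{εu} x)) < val(g(p^{εu} x))`, then `val(h) = val(f)` and
`lc(h) = lc(f) + lc(g)`. -/
theorem sum_equal_valuation (n : ℕ) (f g : HahnSeries ℝ (KK n))
    (hf : f ≠ 0) (hg : g ≠ 0) (hfR : InR n f) (hgR : InR n g)
    (hval : f.order = g.order) (u : Fin n → ℝ)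
    (hlt : ∃ ε₀ : ℝ, 0 < ε₀ ∧ ∀ ε : ℝ, 0 < ε → ε ≤ ε₀ →
        (serSubst n (ε • u) f).order < (serSubst n (ε • u) g).order) :
    (f + g).order = f.order ∧
      (f + g).coeff ((f + g).order) = f.coeff f.order + g.coeff g.order := by
  obtain ⟨ε₀, hε₀, hlt⟩ := hlt
  exact sum_equal_valuation_general hf hg hfR hgR hval
    (frequently_nhds_zero_of_forall_smul hε₀ fun ε hpos hle ↦ (hlt ε hpos hle).ne)
end
end

section
/- (Jacobi triple product) For 0 < |p| < 1 and x ≠ 0: (p;p)_∞ · θ(x;p) = ∑_{n∈ℤ} (-x)^n p^{n(n-1)/2}, where θ(x;p) = (x;p)_∞ (p/x;p)_∞ and (x;p)_∞ = ∏_{r≥0}(1 - x p^r). -/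
/-- The infinite `q`-Pochhammer symbol `(x; p)_∞ = ∏_{r ≥ 0} (1 - x p^r)`. -/
noncomputable def qPochInf (x p : ℂ) : ℂ := ∏' r : ℕ, (1 - x * p ^ r)

/-- The theta function `θ(x; p) = (x; p)_∞ (p/x; p)_∞`. -/
noncomputable def theta (x p : ℂ) : ℂ := qPochInf x p * qPochInf (p / x) p

/-!
The `q`-binomial theorem for `(x q^{-N}; q)_{2N}`, recentred at its middle term, is a finite form of
the identity: `(x; q)_N (q/x; q)_N = ∑_{|n| ≤ N} (-x)^n q^{n(n-1)/2} [2N, N+n]_q`. As `N → ∞` every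
Gaussian binomial coefficient `[2N, N+n]_q` tends to `1 / (q; q)_∞`, and these coefficients are
uniformly bounded, so dominated convergence gives the series.
-/

open Filter Finset Topology

section GaussBinom

/-- The Gaussian binomial coefficient `[n, k]_q`, defined by the `q`-Pascal rule so that it makes
sense, as a polynomial in `q`, over any commutative semiring. -/
def gaussBinom {R : Type*} [CommSemiring R] (q : R) : ℕ → ℕ → R
  | _, 0 => 1
  | 0, _ + 1 => 0
  | n + 1, k + 1 => gaussBinom q n k + q ^ (k + 1) * gaussBinom q n (k + 1)

variable {R : Type*} [CommSemiring R] (q : R)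

@[simp]
theorem gaussBinom_zero_right (n : ℕ) : gaussBinom q n 0 = 1 := by
  cases n <;> rfl

theorem gaussBinom_succ_succ (n k : ℕ) :
    gaussBinom q (n + 1) (k + 1) = gaussBinom q n k + q ^ (k + 1) * gaussBinom q n (k + 1) :=
  rfl

theorem gaussBinom_eq_zero_of_lt {n k : ℕ} (h : n < k) : gaussBinom q n k = 0 := by
  induction n generalizing k with
  | zero => obtain ⟨k, rfl⟩ := Nat.exists_eq_add_of_lt h; rfl
  | succ n ih =>
    obtain ⟨k, rfl⟩ := Nat.exists_eq_succ_of_ne_zero (Nat.ne_zero_of_lt h)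
    rw [gaussBinom_succ_succ, ih (by lia), ih (by lia), mul_zero, add_zero]

@[simp]
theorem gaussBinom_self (n : ℕ) : gaussBinom q n n = 1 := by
  induction n with
  | zero => rfl
  | succ n ih => rw [gaussBinom_succ_succ, ih, gaussBinom_eq_zero_of_lt q n.lt_succ_self,
      mul_zero, add_zero]

theorem prod_one_add_mul_pow_eq_sum_gaussBinom (x : R) (n : ℕ) :
    ∏ r ∈ range n, (1 + x * q ^ r) =
      ∑ k ∈ range (n + 1), x ^ k * q ^ k.choose 2 * gaussBinom q n k := by
  induction n generalizing x with
  | zero => simp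
  | succ n ih =>
    have drop_top : ∑ k ∈ range (n + 1), (x * q) ^ k * q ^ k.choose 2 * gaussBinom q n k =
        ∑ k ∈ range (n + 1), (x * q) ^ (k + 1) * q ^ (k + 1).choose 2 * gaussBinom q n (k + 1)
          + 1 := by
      have extend :=
        sum_range_succ (fun k ↦ (x * q) ^ k * q ^ k.choose 2 * gaussBinom q n k) (n + 1)
      rw [gaussBinom_eq_zero_of_lt q n.lt_succ_self, mul_zero, add_zero] at extend
      rw [← extend, sum_range_succ']
      simp
    calc ∏ r ∈ range (n + 1), (1 + x * q ^ r)
        = (∏ r ∈ range n, (1 + x * q * q ^ r)) * (1 + x) := by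
          simp only [prod_range_succ', pow_succ', mul_assoc, pow_zero, mul_one]
      _ = ∑ k ∈ range (n + 1), (x * q) ^ k * q ^ k.choose 2 * gaussBinom q n k +
            (∑ k ∈ range (n + 1), (x * q) ^ k * q ^ k.choose 2 * gaussBinom q n k) * x := by
          rw [ih, mul_add, mul_one]
      _ = ∑ k ∈ range (n + 1), ((x * q) ^ (k + 1) * q ^ (k + 1).choose 2 * gaussBinom q n (k + 1) +
            (x * q) ^ k * q ^ k.choose 2 * gaussBinom q n k * x) + 1 := by
          nth_rewrite 1 [drop_top]
          rw [sum_mul, add_right_comm, ← sum_add_distrib]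
      _ = ∑ k ∈ range (n + 1 + 1), x ^ k * q ^ k.choose 2 * gaussBinom q (n + 1) k := by
          rw [sum_range_succ' _ (n + 1)]
          refine congrArg₂ (· + ·) (sum_congr rfl fun k _ ↦ ?_) (by simp)
          rw [gaussBinom_succ_succ, Nat.choose_succ_succ' k 1, Nat.choose_one_right]
          ring

end GaussBinom

section QPoch

/-- The finite `q`-Pochhammer symbol `(x; q)_n`, a partial product of `qPochInf x q`. -/
def qPoch {R : Type*} [CommRing R] (x q : R) (n : ℕ) : R := ∏ r ∈ range n, (1 - x * q ^ r)

variable {R : Type*} [CommRing R] (x q : R)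

theorem qPoch_zero : qPoch x q 0 = 1 := prod_range_zero _

theorem qPoch_succ (n : ℕ) : qPoch x q (n + 1) = qPoch x q n * (1 - x * q ^ n) :=
  prod_range_succ _ n

theorem qPoch_add (m n : ℕ) : qPoch x q (m + n) = qPoch x q m * qPoch (x * q ^ m) q n := by
  simp only [qPoch, prod_range_add, pow_add, mul_assoc]

theorem qPoch_succ' (n : ℕ) : qPoch x q (n + 1) = (1 - x) * qPoch (x * q) q n := by
  rw [add_comm, qPoch_add, pow_one, qPoch_succ, qPoch_zero, pow_zero, one_mul, mul_one]

theorem qPoch_eq_sum_gaussBinom (n : ℕ) :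
    qPoch x q n = ∑ k ∈ range (n + 1), (-x) ^ k * q ^ k.choose 2 * gaussBinom q n k := by
  simp only [← prod_one_add_mul_pow_eq_sum_gaussBinom, qPoch, neg_mul, sub_eq_add_neg]

theorem qPoch_mul_qPoch_mul_gaussBinom (k m : ℕ) :
    qPoch q q k * qPoch q q m * gaussBinom q (k + m) k = qPoch q q (k + m) := by
  induction hn : k + m generalizing k m with
  | zero =>
    obtain ⟨rfl, rfl⟩ := Nat.add_eq_zero_iff.mp hn
    simp [qPoch_zero]
  | succ n ih =>
    rcases k with _ | k
    · simp [qPoch_zero, ← hn]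
    rcases m with _ | m
    · simp [qPoch_zero, ← hn]
    have ih_left := ih k (m + 1) (by lia)
    have ih_right := ih (k + 1) m (by lia)
    obtain rfl : n = k + m + 1 := by lia
    rw [qPoch_succ q q m] at ih_left
    rw [qPoch_succ q q k] at ih_right
    rw [gaussBinom_succ_succ, qPoch_succ q q k, qPoch_succ q q m, qPoch_succ q q (k + m + 1)]
    linear_combination (1 - q * q ^ k) * ih_left + q ^ (k + 1) * (1 - q * q ^ m) * ih_right

theorem gaussBinom_add_eq_div {K : Type*} [Field K] {q : K} {k m : ℕ}
    (hk : qPoch q q k ≠ 0) (hm : qPoch q q m ≠ 0) :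
    gaussBinom q (k + m) k = qPoch q q (k + m) / (qPoch q q k * qPoch q q m) := by
  rw [eq_div_iff (mul_ne_zero hk hm), mul_comm, qPoch_mul_qPoch_mul_gaussBinom]

end QPoch

section Finite

/-- The general term `(-x)^n q^{n(n-1)/2}` of the theta series; the integer division is exact. -/
def thetaTerm {K : Type*} [Field K] (x q : K) (n : ℤ) : K := (-x) ^ n * q ^ (n * (n - 1) / 2)

variable {K : Type*} [Field K] {x q : K}

theorem thetaTerm_natCast (x q : K) (n : ℕ) :
    thetaTerm x q n = (-x) ^ n * q ^ n.choose 2 := by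
  have exponent : (n : ℤ) * (n - 1) / 2 = n.choose 2 := by
    rw [Nat.choose_two_right]
    cases n <;> simp
  rw [thetaTerm, exponent, zpow_natCast, zpow_natCast]

theorem thetaTerm_add (hx : x ≠ 0) (hq : q ≠ 0) (m n : ℤ) :
    thetaTerm x q (m + n) = thetaTerm x q m * thetaTerm (x * q ^ m) q n := by
  have exponent : (m + n) * (m + n - 1) / 2 = m * (m - 1) / 2 + n * (n - 1) / 2 + m * n := by
    have hm := Int.ediv_mul_cancel (even_iff_two_dvd.mp (Int.even_mul_pred_self m))
    have hn := Int.ediv_mul_cancel (even_iff_two_dvd.mp (Int.even_mul_pred_self n))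
    exact Int.ediv_eq_of_eq_mul_left two_ne_zero (by linear_combination -hm - hn)
  rw [thetaTerm, exponent, zpow_add₀ (neg_ne_zero.mpr hx), zpow_add₀ hq, zpow_add₀ hq, thetaTerm,
    thetaTerm, ← neg_mul, mul_zpow, ← zpow_mul]
  ring

theorem thetaTerm_add_one (hx : x ≠ 0) (hq : q ≠ 0) (n : ℤ) :
    thetaTerm x q (n + 1) = thetaTerm x q n * -(x * q ^ n) := by
  rw [thetaTerm_add hx hq]
  simp [thetaTerm]

theorem thetaTerm_neg (hq : q ≠ 0) (x : K) (n : ℤ) :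
    thetaTerm x q (-n) = thetaTerm (q / x) q n := by
  have exponent : -n * (-n - 1) / 2 = n + n * (n - 1) / 2 := by
    rw [show -n * (-n - 1) = n * 2 + n * (n - 1) by ring]
    exact Int.add_ediv_of_dvd_left ⟨n, mul_comm _ _⟩ |>.trans (by simp)
  rw [thetaTerm, thetaTerm, exponent, zpow_add₀ hq, ← div_neg, div_zpow, zpow_neg]
  ring

theorem thetaTerm_ne_zero (hx : x ≠ 0) (hq : q ≠ 0) (n : ℤ) : thetaTerm x q n ≠ 0 :=
  mul_ne_zero (zpow_ne_zero _ (neg_ne_zero.mpr hx)) (zpow_ne_zero _ hq)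

theorem thetaTerm_neg_mul_qPoch (hx : x ≠ 0) (hq : q ≠ 0) (N : ℕ) :
    thetaTerm x q (-N) * qPoch (x / q ^ N) q N = qPoch (q / x) q N := by
  rw [thetaTerm_neg hq]
  induction N with
  | zero => simp [thetaTerm, qPoch_zero]
  | succ N ih =>
    have shift : x / q ^ (N + 1) * q = x / q ^ N := by
      rw [pow_succ]
      field_simp
    rw [qPoch_succ', shift, qPoch_succ, ← ih, Nat.cast_succ,
      thetaTerm_add_one (div_ne_zero hq hx) hq, zpow_natCast]
    field_simp
    ring

theorem qPoch_mul_qPoch_div_eq_sum (hx : x ≠ 0) (hq : q ≠ 0) (N : ℕ) :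
    qPoch x q N * qPoch (q / x) q N =
      ∑ n ∈ Icc (-N : ℤ) N, thetaTerm x q n * gaussBinom q (2 * N) (N + n).toNat := by
  have recentre (k : ℕ) : thetaTerm x q (-N) * ((-(x / q ^ N)) ^ k * q ^ k.choose 2) =
      thetaTerm x q (-N + k) := by
    rw [thetaTerm_add hx hq, ← thetaTerm_natCast, zpow_neg, zpow_natCast, div_eq_mul_inv]
  calc qPoch x q N * qPoch (q / x) q N
      = thetaTerm x q (-N) * qPoch (x / q ^ N) q (2 * N) := by
        rw [two_mul, qPoch_add, div_mul_cancel₀ x (pow_ne_zero N hq), ← mul_assoc,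
          thetaTerm_neg_mul_qPoch hx hq, mul_comm]
    _ = ∑ k ∈ range (2 * N + 1), thetaTerm x q (-N + k) * gaussBinom q (2 * N) k := by
        rw [qPoch_eq_sum_gaussBinom, mul_sum]
        exact sum_congr rfl fun k _ ↦ by rw [← mul_assoc, recentre]
    _ = ∑ n ∈ Icc (-N : ℤ) N, thetaTerm x q n * gaussBinom q (2 * N) (N + n).toNat := by
        refine sum_nbij' (fun k ↦ -N + k) (fun n ↦ (N + n).toNat) ?_ ?_ ?_ ?_ ?_ <;>
          intro k hk <;> simp only [mem_range, mem_Icc] at hk ⊢ <;> try lia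
        rw [add_neg_cancel_left, Int.toNat_natCast]

end Finite

theorem tendsto_sum_of_dominated_convergence {α ι G : Type*} {l : Filter α}
    [NormedAddCommGroup G] [CompleteSpace G] {s : α → Finset ι} {f : α → ι → G} {g : ι → G}
    {bound : ι → ℝ} (hs : Tendsto s l atTop) (h_sum : Summable bound)
    (h_lim : ∀ i, Tendsto (f · i) l (𝓝 (g i)))
    (h_bound : ∀ᶠ a in l, ∀ i ∈ s a, ‖f a i‖ ≤ bound i) :
    Tendsto (fun a ↦ ∑ i ∈ s a, f a i) l (𝓝 (∑' i, g i)) := by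
  rcases l.eq_or_neBot with rfl | _
  · exact tendsto_bot
  have eventually_mem (i : ι) : ∀ᶠ a in l, i ∈ s a :=
    (hs.eventually_ge_atTop {i}).mono fun a ha ↦ singleton_subset_iff.mp ha
  have bound_nonneg (i : ι) : 0 ≤ bound i := by
    obtain ⟨a, ha, hi⟩ := (h_bound.and (eventually_mem i)).exists
    exact (norm_nonneg _).trans (ha i hi)
  have sum_eq (a : α) : ∑' i, (s a : Set ι).indicator (f a) i = ∑ i ∈ s a, f a i :=
    (sum_eq_tsum_indicator (f a) (s a)).symm
  refine (tendsto_tsum_of_dominated_convergence h_sum (fun i ↦ ?_) ?_).congr sum_eq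
  · exact (h_lim i).congr' <| (eventually_mem i).mono fun a hi ↦
      (Set.indicator_of_mem (mem_coe.mpr hi) _).symm
  · filter_upwards [h_bound] with a ha i
    by_cases hi : i ∈ s a
    · simpa [hi] using ha i hi
    · simpa [hi] using bound_nonneg i

section NormedField

variable {K : Type*} [NormedField K] {x q : K}

theorem summable_norm_thetaTerm (hx : x ≠ 0) (hq : q ≠ 0) (hq1 : ‖q‖ < 1) :
    Summable fun n : ℤ ↦ ‖thetaTerm x q n‖ := by
  have summable_nat {y : K} (hy : y ≠ 0) : Summable fun n : ℕ ↦ ‖thetaTerm y q n‖ := by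
    have ratio (n : ℕ) : ‖thetaTerm y q (n + 1 : ℕ)‖ / ‖thetaTerm y q n‖ = ‖y‖ * ‖q‖ ^ n := by
      rw [Nat.cast_succ, thetaTerm_add_one hy hq, norm_mul,
        mul_div_cancel_left₀ _ (norm_ne_zero_iff.mpr (thetaTerm_ne_zero hy hq n)), norm_neg,
        norm_mul, zpow_natCast, norm_pow]
    refine summable_of_ratio_test_tendsto_lt_one zero_lt_one
      (.of_forall fun n ↦ norm_ne_zero_iff.mpr (thetaTerm_ne_zero hy hq n)) ?_
    simp only [norm_norm, ratio]
    simpa using (tendsto_pow_atTop_nhds_zero_of_lt_one (norm_nonneg q) hq1).const_mul ‖y‖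
  refine .of_nat_of_neg (summable_nat hx) ?_
  simpa only [thetaTerm_neg hq] using summable_nat (div_ne_zero hq hx)

theorem summable_norm_neg_mul_pow (x : K) (hq1 : ‖q‖ < 1) :
    Summable fun r : ℕ ↦ ‖-(x * q ^ r)‖ := by
  simpa only [norm_neg, norm_mul, norm_pow] using
    (summable_geometric_of_lt_one (norm_nonneg q) hq1).mul_left ‖x‖

theorem one_sub_mul_pow_self_ne_zero (hq1 : ‖q‖ < 1) (r : ℕ) : 1 - q * q ^ r ≠ 0 := by
  rw [← pow_succ', sub_ne_zero]
  intro h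
  have := pow_lt_one₀ (norm_nonneg q) hq1 r.succ_ne_zero
  rw [← norm_pow, ← h, norm_one] at this
  exact this.false

theorem qPoch_self_ne_zero (hq1 : ‖q‖ < 1) (n : ℕ) : qPoch q q n ≠ 0 :=
  prod_ne_zero_iff.mpr fun r _ ↦ one_sub_mul_pow_self_ne_zero hq1 r

end NormedField

section Limit

variable {x q : ℂ}

theorem tendsto_qPoch (x : ℂ) (hq1 : ‖q‖ < 1) :
    Tendsto (qPoch x q) atTop (𝓝 (qPochInf x q)) := by
  have h :=
    (multipliable_one_add_of_summable (summable_norm_neg_mul_pow x hq1)).tendsto_prod_tprod_nat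
  simp only [← sub_eq_add_neg] at h
  exact h

theorem qPochInf_self_ne_zero (hq1 : ‖q‖ < 1) : qPochInf q q ≠ 0 := by
  simpa only [qPochInf, sub_eq_add_neg] using
    tprod_one_add_ne_zero_of_summable (f := fun r : ℕ ↦ -(q * q ^ r))
      (fun r ↦ by simpa only [← sub_eq_add_neg] using one_sub_mul_pow_self_ne_zero hq1 r)
      (summable_norm_neg_mul_pow q hq1)

theorem tendsto_gaussBinom {α : Type*} {l : Filter α} {k m : α → ℕ} (hq1 : ‖q‖ < 1)
    (hk : Tendsto k l atTop) (hm : Tendsto m l atTop) :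
    Tendsto (fun a ↦ gaussBinom q (k a + m a) (k a)) l (𝓝 (qPochInf q q)⁻¹) := by
  have hlim := tendsto_qPoch q hq1
  have hne := qPochInf_self_ne_zero hq1
  have hquot := (hlim.comp (hk.atTop_add_atTop hm)).div ((hlim.comp hk).mul (hlim.comp hm))
    (mul_ne_zero hne hne)
  rw [div_mul_cancel_left₀ hne] at hquot
  exact hquot.congr fun a ↦
    (gaussBinom_add_eq_div (qPoch_self_ne_zero hq1 _) (qPoch_self_ne_zero hq1 _)).symm

theorem exists_norm_gaussBinom_le (hq1 : ‖q‖ < 1) :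
    ∃ C, ∀ n k, ‖gaussBinom q n k‖ ≤ C := by
  have hlim := tendsto_qPoch q hq1
  obtain ⟨A, hA⟩ := hlim.norm.bddAbove_range
  obtain ⟨B, hB⟩ := (hlim.inv₀ (qPochInf_self_ne_zero hq1)).norm.bddAbove_range
  replace hA (n : ℕ) : ‖qPoch q q n‖ ≤ A := hA ⟨n, rfl⟩
  replace hB (n : ℕ) : ‖(qPoch q q n)⁻¹‖ ≤ B := hB ⟨n, rfl⟩
  have hA0 : 0 ≤ A := (norm_nonneg _).trans (hA 0)
  have hB0 : 0 ≤ B := (norm_nonneg _).trans (hB 0)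
  refine ⟨A * (B * B), fun n k ↦ ?_⟩
  rcases lt_or_ge n k with hnk | hkn
  · rw [gaussBinom_eq_zero_of_lt q hnk, norm_zero]
    positivity
  · obtain ⟨m, rfl⟩ := Nat.exists_eq_add_of_le hkn
    rw [gaussBinom_add_eq_div (qPoch_self_ne_zero hq1 _) (qPoch_self_ne_zero hq1 _),
      div_eq_mul_inv, mul_inv, norm_mul, norm_mul]
    gcongr
    exacts [hA _, hB _, hB _]

theorem tendsto_gaussBinom_two_mul (hq1 : ‖q‖ < 1) (n : ℤ) :
    Tendsto (fun N : ℕ ↦ gaussBinom q (2 * N) (N + n).toNat) atTop (𝓝 (qPochInf q q)⁻¹) := by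
  have tendsto_toNat (j : ℤ) : Tendsto (fun N : ℕ ↦ (N + j).toNat) atTop atTop :=
    tendsto_atTop.mpr fun b ↦ (eventually_ge_atTop (b + j.natAbs)).mono fun N hN ↦ by lia
  refine (tendsto_gaussBinom hq1 (tendsto_toNat n) (tendsto_toNat (-n))).congr' ?_
  filter_upwards [eventually_ge_atTop n.natAbs] with N hN
  rw [show (N + n).toNat + (N + -n).toNat = 2 * N by lia]

theorem tendsto_sum_thetaTerm_mul_gaussBinom (hx : x ≠ 0) (hq : q ≠ 0) (hq1 : ‖q‖ < 1) :
    Tendsto (fun N : ℕ ↦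
        ∑ n ∈ Icc (-N : ℤ) N, thetaTerm x q n * gaussBinom q (2 * N) (N + n).toNat)
      atTop (𝓝 ((∑' n : ℤ, thetaTerm x q n) * (qPochInf q q)⁻¹)) := by
  obtain ⟨C, hC⟩ := exists_norm_gaussBinom_le hq1
  rw [← tsum_mul_right]
  refine tendsto_sum_of_dominated_convergence tendsto_Icc_neg
    ((summable_norm_thetaTerm hx hq hq1).mul_right C)
    (fun n ↦ (tendsto_gaussBinom_two_mul hq1 n).const_mul _) (.of_forall fun N n _ ↦ ?_)
  rw [norm_mul]
  exact mul_le_mul_of_nonneg_left (hC _ _) (norm_nonneg _)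

end Limit

/-- (Jacobi triple product.)  For `0 < |p| < 1` and `x ≠ 0`:
`(p; p)_∞ · θ(x; p) = ∑_{n ∈ ℤ} (-x)^n p^{n(n-1)/2}`. -/
theorem jacobi_triple_product (p x : ℂ) (hp0 : 0 < ‖p‖) (hp1 : ‖p‖ < 1) (hx : x ≠ 0) :
    qPochInf p p * theta x p = ∑' n : ℤ, (-x) ^ n * p ^ (n * (n - 1) / 2) := by
  have hp : p ≠ 0 := norm_pos_iff.mp hp0
  have finite_lim := (tendsto_qPoch x hp1).mul (tendsto_qPoch (p / x) hp1)
  simp only [qPoch_mul_qPoch_div_eq_sum hx hp] at finite_lim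
  have theta_eq : theta x p = (∑' n : ℤ, thetaTerm x p n) * (qPochInf p p)⁻¹ :=
    tendsto_nhds_unique finite_lim (tendsto_sum_thetaTerm_mul_gaussBinom hx hp hp1)
  rw [theta_eq, mul_comm, inv_mul_cancel_right₀ (qPochInf_self_ne_zero hp1)]
  rfl
end
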